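/- Consider the full SARAH algorithm, where each outer iteration runs SARAH-IN starting from the previous output: w̃_s = SARAH-IN(w̃_{s−1}, η, b, m). Suppose each f_i is L-smooth, P is τ-gradient dominated, η ≤ 2 / ( L ( sqrt(1 + (4m/b)·((n−b)/(n−1))) + 1 ) ), and η(m+1)/2 > τ. Then E[||∇P(w̃_s)||²] ≤ (γ̄_m)^s · ||∇P(w̃_0)||², where γ̄_m = 2τ/(η(m+1)) < 1. -/

import Mathlib

open scoped BigOperators

noncomputable section

/-- Vectors in `ℝ^d`. -/
abbrev Vec (d : ℕ) := EuclideanSpace ℝ (Fin d)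

/-- The type of mini-batches of size `b` from `{1,…,n}` (modeled as `Fin n`). -/
def Batch (n b : ℕ) : Type := {s : Finset (Fin n) // s.card = b}

instance (n b : ℕ) : Fintype (Batch n b) :=
  inferInstanceAs (Fintype {s : Finset (Fin n) // s.card = b})

/-- Expectation (uniform average) over a finite sample space. -/
def expec {Ω : Type*} [Fintype Ω] (F : Ω → ℝ) : ℝ :=
  (Fintype.card Ω : ℝ)⁻¹ * ∑ ω, F ω

/-- The SARAH-IN state `(w_t, v_t)` given a starting point `w0`, a learning rate `η`,
a batch size `b` and a sequence of mini-batches `I` (where `I t` is the batch used to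
form `v_t`, for `t ≥ 1`). -/
def sarahState {d n : ℕ} (f : Fin n → Vec d → ℝ) (w0 : Vec d) (η : ℝ) (b : ℕ)
    (I : ℕ → Finset (Fin n)) : ℕ → Vec d × Vec d
  | 0 => (w0, (n : ℝ)⁻¹ • ∑ i, gradient (f i) w0)
  | t + 1 =>
    let p := sarahState f w0 η b I t
    let w' := p.1 - η • p.2
    (w', (b : ℝ)⁻¹ • ∑ i ∈ I (t + 1), (gradient (f i) w' - gradient (f i) p.1) + p.2)

/-- Extend a finite sequence of mini-batches to all of `ℕ` (indices `≥ T` are irrelevant). -/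
def pad {n b T : ℕ} (ω : Fin T → Batch n b) : ℕ → Finset (Fin n) :=
  fun t => if h : t < T then (ω ⟨t, h⟩).1 else ∅

/-- The outer iterates of full SARAH: `w̃_{s} = SARAH-IN(w̃_{s−1}, η, b, ·)`, where the
`s`-th outer iteration uses the sequence of mini-batches `(ω s).1` and returns the iterate
with index `(ω s).2`. -/
def outerIter {d n : ℕ} (f : Fin n → Vec d → ℝ) (w0 : Vec d) (η : ℝ) (b : ℕ)
    (ω : ℕ → (ℕ → Finset (Fin n)) × ℕ) : ℕ → Vec d
  | 0 => w0
  | s + 1 => (sarahState f (outerIter f w0 η b ω s) η b (ω s).1 ((ω s).2)).1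

/-- Extend finitely many outer-loop random seeds (each consisting of `m+1` mini-batches and
a uniformly random output index in `{0,…,m}`) to all of `ℕ`. -/
def padOuter {n b m S : ℕ} (ω : Fin S → (Fin (m + 1) → Batch n b) × Fin (m + 1)) :
    ℕ → (ℕ → Finset (Fin n)) × ℕ :=
  fun k => if h : k < S then (pad (ω ⟨k, h⟩).1, ((ω ⟨k, h⟩).2 : ℕ)) else (fun _ => ∅, 0)

/-!
Write `P` for the average of the `fᵢ`, and `e_t = v_t - ∇P(w_t)` for the error of the recursive
gradient estimate. A batch of size `b` drawn without replacement estimates a mean with variance at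
most `(n - b) / (b (n - 1))` times the mean square, so conditioning on the batches before `t + 1`
gives `E‖e_{t+1}‖² ≤ E‖e_t‖² + κ (Lη)² E‖v_t‖²` with `κ = (n - b) / (b (n - 1))`, and `e_0 = 0`.
The descent inequality for `P` yields
`‖∇P(w_t)‖² + (1 - Lη) ‖v_t‖² ≤ (2/η) (P(w_t) - P(w_{t+1})) + ‖e_t‖²`.
Summed over `t ≤ m`, the errors contribute at most `κ m (Lη)² ∑ E‖v_t‖²`, which the step size
condition makes at most `(1 - Lη) ∑ E‖v_t‖²`, while the function values telescope. Gradient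
dominance turns the resulting bound `(2/η) (P(w_0) - P(w_*))` into a contraction of `E‖∇P‖²`.
-/

/-! ### Uniform averages -/

section Average

open Finset

lemma expec_eq_expect {Ω : Type*} [Fintype Ω] (F : Ω → ℝ) : expec F = 𝔼 ω, F ω := by
  rw [expec, Fintype.expect_eq_sum_div_card, div_eq_inv_mul]

-- The swap `(ω, a) ↦ (update ω k a, ω k)` preserves the uniform measure.
lemma expect_apply_eq_expect_expect {ι M : Type*} {B : ι → Type*} [Fintype ι] [DecidableEq ι]
    [∀ i, Fintype (B i)] [∀ i, Nonempty (B i)] [AddCommMonoid M] [Module ℚ≥0 M] (k : ι)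
    (G : (∀ i, B i) → B k → M) (hG : ∀ ω a, G (Function.update ω k a) = G ω) :
    𝔼 ω, G ω (ω k) = 𝔼 ω, 𝔼 a, G ω a := by
  have hswap : Function.Involutive
      fun p : (∀ i, B i) × B k ↦ (Function.update p.1 k p.2, p.1 k) := fun p ↦ by simp
  calc 𝔼 ω, G ω (ω k)
      = 𝔼 ω, 𝔼 _a : B k, G ω (ω k) := by simp only [Fintype.expect_const]
    _ = 𝔼 p : (∀ i, B i) × B k, G p.1 (p.1 k) := by rw [← univ_product_univ, expect_product]
    _ = 𝔼 p : (∀ i, B i) × B k, G p.1 p.2 :=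
      Fintype.expect_equiv hswap.toPerm _ _ fun p ↦ by
        simp only [Function.Involutive.coe_toPerm, hG]
    _ = 𝔼 ω, 𝔼 a, G ω a := by rw [← univ_product_univ, expect_product]

end Average

/-! ### Sampling without replacement -/

section Sampling

open Finset
open scoped RealInnerProductSpace

section Counting

variable {ι : Type*} {s : Finset ι} {b : ℕ}

lemma expect_powersetCard_ite_subset [DecidableEq ι] {T : Finset ι} (hT : T ⊆ s) (hb : b ≤ #s) :
    𝔼 I ∈ s.powersetCard b, (if T ⊆ I then (1 : ℝ) else 0)
      = (b.choose #T : ℝ) / (#s).choose #T := by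
  rw [expect_eq_sum_div_card, sum_boole, card_powersetCard]
  rcases le_or_gt #T b with hTb | hbT
  · have hchoose_b : ((#s).choose b : ℝ) ≠ 0 := mod_cast (Nat.choose_pos hb).ne'
    have hchoose_T : ((#s).choose #T : ℝ) ≠ 0 := mod_cast (Nat.choose_pos (card_le_card hT)).ne'
    rw [card_filter_powersetCard_subset _ _ _ hT hTb, div_eq_div_iff hchoose_b hchoose_T]
    have := Nat.choose_mul (n := #s) hTb
    norm_cast
    linarith
  · have hempty : {I ∈ s.powersetCard b | T ⊆ I} = ∅ :=
      filter_eq_empty_iff.2 fun I hI hTI ↦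
        hbT.not_ge ((card_le_card hTI).trans_eq (mem_powersetCard.1 hI).2)
    simp [hempty, Nat.choose_eq_zero_of_lt hbT]

lemma expect_powersetCard_sum_filter_subset [DecidableEq ι] {κ : Type*} {K : Finset κ}
    {T : κ → Finset ι} {t : ℕ} (hTs : ∀ k ∈ K, T k ⊆ s) (hTt : ∀ k ∈ K, #(T k) = t) (hb : b ≤ #s)
    (g : κ → ℝ) :
    𝔼 I ∈ s.powersetCard b, ∑ k ∈ K with T k ⊆ I, g k
      = (b.choose t : ℝ) / (#s).choose t * ∑ k ∈ K, g k := by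
  simp only [sum_filter, ← boole_mul _ (g _)]
  rw [expect_sum_comm, mul_sum]
  refine sum_congr rfl fun k hk ↦ ?_
  rw [← expect_mul, expect_powersetCard_ite_subset (hTs k hk) hb, hTt k hk]

lemma expect_powersetCard_sum (hb : b ≤ #s) (g : ι → ℝ) :
    𝔼 I ∈ s.powersetCard b, ∑ i ∈ I, g i = (b : ℝ) / #s * ∑ i ∈ s, g i := by
  classical
  have h := expect_powersetCard_sum_filter_subset (s := s) (K := s) (T := fun i ↦ {i})
    (fun i hi ↦ singleton_subset_iff.2 hi) (fun i _ ↦ card_singleton i) hb g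
  simp only [Nat.choose_one_right, singleton_subset_iff, filter_mem_eq_inter] at h
  rw [← h]
  refine expect_congr rfl fun I hI ↦ ?_
  rw [inter_eq_right.2 (mem_powersetCard.1 hI).1]

lemma expect_powersetCard_sum_offDiag (hb : b ≤ #s) (g : ι × ι → ℝ) :
    𝔼 I ∈ s.powersetCard b, ∑ p ∈ I.offDiag, g p
      = (b * (b - 1) : ℝ) / (#s * (#s - 1)) * ∑ p ∈ s.offDiag, g p := by
  classical
  have h := expect_powersetCard_sum_filter_subset (s := s) (K := s.offDiag)
    (T := fun p ↦ {p.1, p.2})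
    (fun p hp ↦ by simp_all [mem_offDiag, insert_subset_iff])
    (fun p hp ↦ card_pair (mem_offDiag.1 hp).2.2) hb g
  rw [Nat.cast_choose_two, Nat.cast_choose_two, div_div_div_cancel_right₀ two_ne_zero] at h
  rw [← h]
  refine expect_congr rfl fun I hI ↦ sum_congr ?_ fun _ _ ↦ rfl
  have hIs := (mem_powersetCard.1 hI).1
  grind

end Counting

variable {ι E : Type*} [NormedAddCommGroup E] [InnerProductSpace ℝ E] {s : Finset ι} {b : ℕ}

lemma sq_norm_sum_eq_add_sum_offDiag (s : Finset ι) (y : ι → E) :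
    ‖∑ i ∈ s, y i‖ ^ 2 = ∑ i ∈ s, ‖y i‖ ^ 2 + ∑ p ∈ s.offDiag, ⟪y p.1, y p.2⟫ := by
  classical
  simp only [← real_inner_self_eq_norm_sq]
  rw [sum_inner]
  simp only [inner_sum]
  rw [← sum_product', ← diag_union_offDiag, sum_union (disjoint_diag_offDiag s), sum_diag]

lemma sum_sq_norm_sub_mean_le (s : Finset ι) (x : ι → E) :
    ∑ i ∈ s, ‖x i - (#s : ℝ)⁻¹ • ∑ j ∈ s, x j‖ ^ 2 ≤ ∑ i ∈ s, ‖x i‖ ^ 2 := by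
  rcases s.eq_empty_or_nonempty with rfl | hs
  · simp
  set μ := (#s : ℝ)⁻¹ • ∑ j ∈ s, x j with hμ
  have hcard : (#s : ℝ) ≠ 0 := mod_cast hs.card_ne_zero
  have hsum : ∑ i ∈ s, x i = (#s : ℝ) • μ := by rw [hμ, smul_inv_smul₀ hcard]
  have hpythagoras : ∑ i ∈ s, ‖x i - μ‖ ^ 2 = ∑ i ∈ s, ‖x i‖ ^ 2 - #s * ‖μ‖ ^ 2 := by
    simp only [norm_sub_sq_real]
    rw [sum_add_distrib, sum_sub_distrib, ← mul_sum, ← sum_inner, hsum, real_inner_smul_left,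
      real_inner_self_eq_norm_sq, sum_const, nsmul_eq_mul]
    ring
  rw [hpythagoras]
  exact sub_le_self _ (mul_nonneg (#s).cast_nonneg (sq_nonneg ‖μ‖))

lemma expect_sq_norm_sum_of_sum_eq_zero (hs : 2 ≤ #s) (hb : b ≤ #s) {y : ι → E}
    (hy : ∑ i ∈ s, y i = 0) :
    𝔼 I ∈ s.powersetCard b, ‖∑ i ∈ I, y i‖ ^ 2
      = (b * (#s - b) : ℝ) / (#s * (#s - 1)) * ∑ i ∈ s, ‖y i‖ ^ 2 := by
  have hcard : (2 : ℝ) ≤ #s := mod_cast hs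
  have hoffDiag : ∑ p ∈ s.offDiag, ⟪y p.1, y p.2⟫ = -∑ i ∈ s, ‖y i‖ ^ 2 := by
    have := sq_norm_sum_eq_add_sum_offDiag s y
    rw [hy, norm_zero] at this
    linarith
  simp only [sq_norm_sum_eq_add_sum_offDiag _ y, expect_add_distrib]
  rw [expect_powersetCard_sum hb, expect_powersetCard_sum_offDiag hb, hoffDiag]
  have : (#s : ℝ) - 1 ≠ 0 := by linarith
  field_simp
  ring

/-- The factor `(n - b) / (b (n - 1))` by which averaging over `b` of `n` points, drawn without
replacement, reduces the variance; it contains the finite population correction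
`(n - b) / (n - 1)`. -/
def batchVarianceFactor (n b : ℕ) : ℝ := ((n : ℝ) - b) / ((n : ℝ) - 1) / b

lemma batchVarianceFactor_nonneg {n : ℕ} (hn : 1 ≤ n) (hbn : b ≤ n) :
    0 ≤ batchVarianceFactor n b := by
  have hn' : (1 : ℝ) ≤ n := mod_cast hn
  have hbn' : (b : ℝ) ≤ n := mod_cast hbn
  exact div_nonneg (div_nonneg (by linarith) (by linarith)) b.cast_nonneg

lemma expect_sq_norm_batchMean_add (hs : 2 ≤ #s) (hb₀ : 1 ≤ b) (hb : b ≤ #s) {y : ι → E}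
    (hy : ∑ i ∈ s, y i = 0) (e : E) :
    𝔼 I ∈ s.powersetCard b, ‖(b : ℝ)⁻¹ • ∑ i ∈ I, y i + e‖ ^ 2
      = ‖e‖ ^ 2 + batchVarianceFactor #s b * ((#s : ℝ)⁻¹ * ∑ i ∈ s, ‖y i‖ ^ 2) := by
  have hb_ne : (b : ℝ) ≠ 0 := mod_cast Nat.one_le_iff_ne_zero.1 hb₀
  have hexpand (I : Finset ι) : ‖(b : ℝ)⁻¹ • ∑ i ∈ I, y i + e‖ ^ 2
      = (b : ℝ)⁻¹ ^ 2 * ‖∑ i ∈ I, y i‖ ^ 2 + 2 * (b : ℝ)⁻¹ * ∑ i ∈ I, ⟪y i, e⟫ + ‖e‖ ^ 2 := by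
    rw [norm_add_sq_real, norm_smul, real_inner_smul_left, sum_inner, mul_pow, Real.norm_eq_abs,
      sq_abs]
    ring
  have hcross : 𝔼 I ∈ s.powersetCard b, ∑ i ∈ I, ⟪y i, e⟫ = 0 := by
    rw [expect_powersetCard_sum hb, ← sum_inner, hy, inner_zero_left, mul_zero]
  simp only [hexpand, expect_add_distrib, ← mul_expect]
  rw [expect_sq_norm_sum_of_sum_eq_zero hs hb hy, hcross,
    expect_const (powersetCard_nonempty.2 hb), batchVarianceFactor]
  field_simp
  ring

lemma expect_sq_norm_batchMean_sub_mean_add_le (hs : 2 ≤ #s) (hb₀ : 1 ≤ b) (hb : b ≤ #s)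
    (x : ι → E) (e : E) :
    𝔼 I ∈ s.powersetCard b,
        ‖((b : ℝ)⁻¹ • ∑ i ∈ I, x i - (#s : ℝ)⁻¹ • ∑ i ∈ s, x i) + e‖ ^ 2
      ≤ ‖e‖ ^ 2 + batchVarianceFactor #s b * ((#s : ℝ)⁻¹ * ∑ i ∈ s, ‖x i‖ ^ 2) := by
  set μ := (#s : ℝ)⁻¹ • ∑ i ∈ s, x i with hμ
  have hcentered : ∑ i ∈ s, (x i - μ) = 0 := by
    rw [sum_sub_distrib, sum_const, ← Nat.cast_smul_eq_nsmul ℝ, hμ,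
      smul_inv_smul₀ (by positivity), sub_self]
  have hmean (I : Finset ι) (hI : I ∈ s.powersetCard b) :
      (b : ℝ)⁻¹ • ∑ i ∈ I, x i - μ = (b : ℝ)⁻¹ • ∑ i ∈ I, (x i - μ) := by
    rw [sum_sub_distrib, sum_const, (mem_powersetCard.1 hI).2, ← Nat.cast_smul_eq_nsmul ℝ,
      smul_sub, inv_smul_smul₀ (by positivity)]
  calc 𝔼 I ∈ s.powersetCard b, ‖((b : ℝ)⁻¹ • ∑ i ∈ I, x i - μ) + e‖ ^ 2
      = 𝔼 I ∈ s.powersetCard b, ‖(b : ℝ)⁻¹ • ∑ i ∈ I, (x i - μ) + e‖ ^ 2 :=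
        expect_congr rfl fun I hI ↦ by rw [hmean I hI]
    _ = ‖e‖ ^ 2 + batchVarianceFactor #s b * ((#s : ℝ)⁻¹ * ∑ i ∈ s, ‖x i - μ‖ ^ 2) :=
        expect_sq_norm_batchMean_add hs hb₀ hb hcentered e
    _ ≤ ‖e‖ ^ 2 + batchVarianceFactor #s b * ((#s : ℝ)⁻¹ * ∑ i ∈ s, ‖x i‖ ^ 2) := by
        have := batchVarianceFactor_nonneg (one_le_two.trans hs) hb
        gcongr _ + _ * (_ * ?_)
        exact sum_sq_norm_sub_mean_le s x

lemma batch_nonempty {n : ℕ} (hbn : b ≤ n) : Nonempty (Batch n b) := by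
  obtain ⟨I, -, hI⟩ := exists_subset_card_eq (s := (univ : Finset (Fin n))) (n := b) (by simpa)
  exact ⟨⟨I, hI⟩⟩

lemma expect_batch_eq_expect_powersetCard {n : ℕ} {M : Type*} [AddCommMonoid M] [Module ℚ≥0 M]
    (F : Finset (Fin n) → M) :
    𝔼 I : Batch n b, F I.1 = 𝔼 I ∈ (univ : Finset (Fin n)).powersetCard b, F I :=
  expect_bij (fun I _ ↦ I.1) (fun I _ ↦ mem_powersetCard.2 ⟨subset_univ _, I.2⟩) (fun _ _ ↦ rfl)
    (fun _ _ _ _ h ↦ Subtype.ext h)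
    fun I hI ↦ ⟨⟨I, (mem_powersetCard.1 hI).2⟩, mem_univ _, rfl⟩

end Sampling

/-! ### Smooth functions and their averages -/

section Smooth

open scoped Gradient RealInnerProductSpace

variable {E : Type*} [NormedAddCommGroup E] [InnerProductSpace ℝ E] [CompleteSpace E] {L : ℝ}

/-- `L`-smoothness: `f` is differentiable with `L`-Lipschitz gradient. Differentiability is part of
the notion because Mathlib's `∇ f w` is `0` where `f` is not differentiable. -/
structure IsLSmooth (L : ℝ) (f : E → ℝ) : Prop where
  differentiable : Differentiable ℝ f
  norm_gradient_sub_le : ∀ w w', ‖∇ f w - ∇ f w'‖ ≤ L * ‖w - w'‖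

lemma IsLSmooth.le_quadratic {f : E → ℝ} (hf : IsLSmooth L f) (w u : E) :
    f (w + u) ≤ f w + ⟪∇ f w, u⟫ + L / 2 * ‖u‖ ^ 2 := by
  let φ : ℝ → ℝ := fun t ↦ f (w + t • u) - t * ⟪∇ f w, u⟫ - L / 2 * ‖u‖ ^ 2 * t ^ 2
  have hφ (t : ℝ) : HasDerivAt φ (⟪∇ f (w + t • u) - ∇ f w, u⟫ - L * ‖u‖ ^ 2 * t) t := by
    have hline : HasDerivAt (fun t : ℝ ↦ w + t • u) u t := by
      simpa using ((hasDerivAt_id t).smul_const u).const_add w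
    have hcomp := (hf.differentiable (w + t • u)).hasFDerivAt.comp_hasDerivAt t hline
    rw [← inner_gradient_left] at hcomp
    refine ((hcomp.sub ((hasDerivAt_id t).mul_const _)).sub
      ((hasDerivAt_pow 2 t).const_mul _)).congr_deriv ?_
    rw [inner_sub_left]
    push_cast
    ring
  have hderiv_nonpos {t : ℝ} (ht : 0 < t) : ⟪∇ f (w + t • u) - ∇ f w, u⟫ - L * ‖u‖ ^ 2 * t ≤ 0 :=
    sub_nonpos.2 <| calc
      ⟪∇ f (w + t • u) - ∇ f w, u⟫ ≤ ‖∇ f (w + t • u) - ∇ f w‖ * ‖u‖ := real_inner_le_norm _ _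
      _ ≤ L * ‖w + t • u - w‖ * ‖u‖ := by gcongr; exact hf.norm_gradient_sub_le _ _
      _ = L * ‖u‖ ^ 2 * t := by
        rw [add_sub_cancel_left, norm_smul, Real.norm_of_nonneg ht.le]; ring
  have hanti : AntitoneOn φ (Set.Icc 0 1) := by
    refine antitoneOn_of_hasDerivWithinAt_nonpos (convex_Icc 0 1)
      (fun t _ ↦ (hφ t).continuousAt.continuousWithinAt)
      (fun t _ ↦ (hφ t).hasDerivWithinAt) fun t ht ↦ hderiv_nonpos ?_
    rw [interior_Icc] at ht
    exact ht.1
  have h01 : φ 1 ≤ φ 0 :=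
    hanti (Set.left_mem_Icc.2 zero_le_one) (Set.right_mem_Icc.2 zero_le_one) zero_le_one
  simp only [φ, one_smul, zero_smul, add_zero] at h01
  linarith

lemma IsLSmooth.sq_norm_gradient_add_le {f : E → ℝ} (hf : IsLSmooth L f) {η : ℝ} (hη : 0 < η)
    (w v : E) :
    ‖∇ f w‖ ^ 2 + (1 - L * η) * ‖v‖ ^ 2
      ≤ 2 / η * (f w - f (w - η • v)) + ‖v - ∇ f w‖ ^ 2 := by
  have hquad := hf.le_quadratic w (-(η • v))
  rw [← sub_eq_add_neg, inner_neg_right, real_inner_smul_right, norm_neg, norm_smul, mul_pow,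
    Real.norm_eq_abs, sq_abs] at hquad
  have hscaled : 2 * ⟪∇ f w, v⟫ - L * η * ‖v‖ ^ 2 ≤ 2 / η * (f w - f (w - η • v)) := by
    rw [div_mul_eq_mul_div, le_div_iff₀ hη]
    linarith
  rw [norm_sub_sq_real, real_inner_comm]
  linarith

variable {n : ℕ} {f : Fin n → E → ℝ}

/-- The objective `P` of finite-sum minimization: the average of the component functions. -/
def objective (f : Fin n → E → ℝ) : E → ℝ := fun w ↦ (n : ℝ)⁻¹ * ∑ i, f i w

lemma hasGradientAt_objective (hf : ∀ i, Differentiable ℝ (f i)) (w : E) :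
    HasGradientAt (objective f) ((n : ℝ)⁻¹ • ∑ i, ∇ (f i) w) w := by
  rw [hasGradientAt_iff_hasFDerivAt]
  unfold objective
  have hsum := HasFDerivAt.fun_sum fun i (_ : i ∈ Finset.univ) ↦
    hasGradientAt_iff_hasFDerivAt.1 (hf i w).hasGradientAt
  simpa [objective] using hsum.const_mul (n : ℝ)⁻¹

lemma gradient_objective (hf : ∀ i, Differentiable ℝ (f i)) (w : E) :
    ∇ (objective f) w = (n : ℝ)⁻¹ • ∑ i, ∇ (f i) w :=
  (hasGradientAt_objective hf w).gradient

lemma isLSmooth_objective [NeZero n] (hf : ∀ i, IsLSmooth L (f i)) :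
    IsLSmooth L (objective f) where
  differentiable w := (hasGradientAt_objective (fun i ↦ (hf i).differentiable) w).differentiableAt
  norm_gradient_sub_le w w' := by
    have hn : (0 : ℝ) < n := mod_cast NeZero.pos n
    simp only [gradient_objective fun i ↦ (hf i).differentiable]
    rw [← smul_sub, ← Finset.sum_sub_distrib, norm_smul, norm_inv, Real.norm_natCast,
      inv_mul_le_iff₀ hn]
    refine (norm_sum_le_of_le _ fun i _ ↦ (hf i).norm_gradient_sub_le w w').trans_eq ?_
    simp

lemma expect_sq_norm_batch_gradient_sub_add_le {b : ℕ} (hn : 2 ≤ n) (hb : 1 ≤ b) (hbn : b ≤ n)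
    (hf : ∀ i, IsLSmooth L (f i)) (w w' e : E) :
    𝔼 I : Batch n b, ‖((b : ℝ)⁻¹ • ∑ i ∈ I.1, (∇ (f i) w' - ∇ (f i) w)
        - (∇ (objective f) w' - ∇ (objective f) w)) + e‖ ^ 2
      ≤ ‖e‖ ^ 2 + batchVarianceFactor n b * (L * ‖w' - w‖) ^ 2 := by
  have hn_pos : (0 : ℝ) < n := mod_cast zero_lt_two.trans_le hn
  have hmean_sq : (n : ℝ)⁻¹ * ∑ i, ‖∇ (f i) w' - ∇ (f i) w‖ ^ 2 ≤ (L * ‖w' - w‖) ^ 2 := by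
    rw [inv_mul_le_iff₀ hn_pos]
    calc ∑ i, ‖∇ (f i) w' - ∇ (f i) w‖ ^ 2 ≤ ∑ _i : Fin n, (L * ‖w' - w‖) ^ 2 := by
          gcongr with i; exact (hf i).norm_gradient_sub_le w' w
      _ = n * (L * ‖w' - w‖) ^ 2 := by simp
  have hκ := batchVarianceFactor_nonneg (one_le_two.trans hn) hbn
  have hvar := expect_sq_norm_batchMean_sub_mean_add_le (s := (Finset.univ : Finset (Fin n)))
    (by simpa) hb (by simpa) (fun i ↦ ∇ (f i) w' - ∇ (f i) w) e
  rw [Finset.card_fin, ← expect_batch_eq_expect_powersetCard fun I ↦ ‖_ - _ + e‖ ^ 2] at hvar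
  simp only [gradient_objective fun i ↦ (hf i).differentiable]
  rw [← smul_sub, ← Finset.sum_sub_distrib]
  exact hvar.trans (by gcongr)

end Smooth

/-! ### The step size -/

-- `2 / (√(1 + 4a) + 1)` is the positive root of `a x² + x = 1`.
lemma mul_sq_le_one_sub_of_le_div_sqrt {a x : ℝ} (ha : 0 ≤ a) (hx : 0 ≤ x)
    (h : x ≤ 2 / (√(1 + 4 * a) + 1)) : a * x ^ 2 ≤ 1 - x := by
  set r := √(1 + 4 * a)
  have hr_one : 1 ≤ r := Real.one_le_sqrt.2 (by linarith)
  have hr_sq : r ^ 2 = 1 + 4 * a := Real.sq_sqrt (by linarith)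
  have hxr : x * (r + 1) ≤ 2 := (le_div_iff₀ (by linarith)).1 h
  calc a * x ^ 2 = (r - 1) * x / 4 * (x * (r + 1)) := by
        linear_combination (-x ^ 2 / 4) * hr_sq
    _ ≤ (r - 1) * x / 4 * 2 := by
        have : 0 ≤ r - 1 := sub_nonneg.2 hr_one
        gcongr
    _ ≤ 1 - x := by linarith

/-! ### The inner loop -/

section InnerLoop

open Finset
open scoped Gradient

variable {d n b m t : ℕ} {f : Fin n → Vec d → ℝ} {w₀ : Vec d} {η L : ℝ}

/-- The iterate `w_t` of SARAH-IN. -/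
abbrev sarahIterate (f : Fin n → Vec d → ℝ) (w₀ : Vec d) (η : ℝ) (b : ℕ)
    (I : ℕ → Finset (Fin n)) (t : ℕ) : Vec d :=
  (sarahState f w₀ η b I t).1

/-- The recursive gradient estimate `v_t` of SARAH-IN. -/
abbrev sarahEstimate (f : Fin n → Vec d → ℝ) (w₀ : Vec d) (η : ℝ) (b : ℕ)
    (I : ℕ → Finset (Fin n)) (t : ℕ) : Vec d :=
  (sarahState f w₀ η b I t).2

/-- The error `v_t - ∇P(w_t)` of the gradient estimate of SARAH-IN. -/
def sarahError (f : Fin n → Vec d → ℝ) (w₀ : Vec d) (η : ℝ) (b : ℕ)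
    (I : ℕ → Finset (Fin n)) (t : ℕ) : Vec d :=
  sarahEstimate f w₀ η b I t - ∇ (objective f) (sarahIterate f w₀ η b I t)

lemma sarahState_congr {I J : ℕ → Finset (Fin n)} (h : ∀ k ≤ t, I k = J k) :
    sarahState f w₀ η b I t = sarahState f w₀ η b J t := by
  induction t with
  | zero => rfl
  | succ t ih => simp only [sarahState, ih fun k hk ↦ h k (by lia), h (t + 1) le_rfl]

lemma pad_of_lt {T k : ℕ} (ω : Fin T → Batch n b) (hk : k < T) : pad ω k = (ω ⟨k, hk⟩).1 :=
  dif_pos hk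

lemma pad_update_of_ne {T k : ℕ} {j : Fin T} (ω : Fin T → Batch n b) (I : Batch n b)
    (hkj : k ≠ j) : pad (Function.update ω j I) k = pad ω k := by
  unfold pad
  split_ifs
  · rw [Function.update_of_ne (by simpa [Fin.ext_iff] using hkj)]
  · rfl

lemma sarahError_zero (hf : ∀ i, Differentiable ℝ (f i)) (I : ℕ → Finset (Fin n)) :
    sarahError f w₀ η b I 0 = 0 :=
  sub_eq_zero.2 (gradient_objective hf w₀).symm

lemma sarahError_succ (I : ℕ → Finset (Fin n)) (t : ℕ) :
    sarahError f w₀ η b I (t + 1)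
      = ((b : ℝ)⁻¹ • ∑ i ∈ I (t + 1), (∇ (f i) (sarahIterate f w₀ η b I (t + 1))
            - ∇ (f i) (sarahIterate f w₀ η b I t))
          - (∇ (objective f) (sarahIterate f w₀ η b I (t + 1))
            - ∇ (objective f) (sarahIterate f w₀ η b I t)))
        + sarahError f w₀ η b I t := by
  simp only [sarahError, sarahIterate, sarahEstimate, sarahState]
  abel

lemma expect_sq_norm_sarahError_succ_le (hn : 2 ≤ n) (hb : 1 ≤ b) (hbn : b ≤ n)
    (hf : ∀ i, IsLSmooth L (f i)) {T : ℕ} (ht : t + 1 < T) :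
    𝔼 ω : Fin T → Batch n b, ‖sarahError f w₀ η b (pad ω) (t + 1)‖ ^ 2
      ≤ 𝔼 ω : Fin T → Batch n b, ‖sarahError f w₀ η b (pad ω) t‖ ^ 2
        + batchVarianceFactor n b * (L * η) ^ 2
          * 𝔼 ω : Fin T → Batch n b, ‖sarahEstimate f w₀ η b (pad ω) t‖ ^ 2 := by
  have := batch_nonempty hbn
  let w (ω : Fin T → Batch n b) := sarahIterate f w₀ η b (pad ω) t
  let w' (ω : Fin T → Batch n b) := sarahIterate f w₀ η b (pad ω) (t + 1)
  let e (ω : Fin T → Batch n b) := sarahError f w₀ η b (pad ω) t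
  let G (ω : Fin T → Batch n b) (I : Batch n b) : ℝ :=
    ‖((b : ℝ)⁻¹ • ∑ i ∈ I.1, (∇ (f i) (w' ω) - ∇ (f i) (w ω))
      - (∇ (objective f) (w' ω) - ∇ (objective f) (w ω))) + e ω‖ ^ 2
  have hG (ω : Fin T → Batch n b) (I : Batch n b) :
      G (Function.update ω ⟨t + 1, ht⟩ I) = G ω := by
    have hpast : sarahState f w₀ η b (pad (Function.update ω ⟨t + 1, ht⟩ I)) t
        = sarahState f w₀ η b (pad ω) t :=
      sarahState_congr fun k hk ↦ pad_update_of_ne ω I (Nat.lt_succ_of_le hk).ne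
    simp only [G, w, w', e, sarahError, sarahIterate, sarahEstimate, sarahState, hpast]
  have hstep (ω : Fin T → Batch n b) :
      ‖w' ω - w ω‖ = |η| * ‖sarahEstimate f w₀ η b (pad ω) t‖ := by
    simp only [w, w', sarahIterate, sarahEstimate, sarahState, sub_sub_cancel_left, norm_neg,
      norm_smul, Real.norm_eq_abs]
  calc 𝔼 ω : Fin T → Batch n b, ‖sarahError f w₀ η b (pad ω) (t + 1)‖ ^ 2
      = 𝔼 ω, G ω (ω ⟨t + 1, ht⟩) := by
        simp only [sarahError_succ, pad_of_lt _ ht, G, w, w', e]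
    _ = 𝔼 ω, 𝔼 I, G ω I := expect_apply_eq_expect_expect _ G hG
    _ ≤ 𝔼 ω, (‖e ω‖ ^ 2 + batchVarianceFactor n b * (L * ‖w' ω - w ω‖) ^ 2) :=
        expect_le_expect fun ω _ ↦
          expect_sq_norm_batch_gradient_sub_add_le hn hb hbn hf (w ω) (w' ω) (e ω)
    _ = _ := by
        simp only [hstep, mul_pow, sq_abs, expect_add_distrib, ← mul_expect, ← mul_assoc, e]

lemma expect_sq_norm_sarahError_le (hn : 2 ≤ n) (hb : 1 ≤ b) (hbn : b ≤ n)
    (hf : ∀ i, IsLSmooth L (f i)) {T : ℕ} (ht : t < T) :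
    𝔼 ω : Fin T → Batch n b, ‖sarahError f w₀ η b (pad ω) t‖ ^ 2
      ≤ batchVarianceFactor n b * (L * η) ^ 2
        * ∑ j ∈ range t, 𝔼 ω : Fin T → Batch n b, ‖sarahEstimate f w₀ η b (pad ω) j‖ ^ 2 := by
  induction t with
  | zero => simp [sarahError_zero fun i ↦ (hf i).differentiable]
  | succ t ih =>
    have hstep := expect_sq_norm_sarahError_succ_le (w₀ := w₀) (η := η) hn hb hbn hf ht
    rw [sum_range_succ, mul_add]
    linarith [ih (by lia)]

lemma sum_expect_sq_norm_sarahError_le (hn : 2 ≤ n) (hb : 1 ≤ b) (hbn : b ≤ n)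
    (hf : ∀ i, IsLSmooth L (f i)) (m : ℕ) :
    ∑ t ∈ range (m + 1), 𝔼 ω : Fin (m + 1) → Batch n b, ‖sarahError f w₀ η b (pad ω) t‖ ^ 2
      ≤ batchVarianceFactor n b * m * (L * η) ^ 2 * ∑ t ∈ range (m + 1),
        𝔼 ω : Fin (m + 1) → Batch n b, ‖sarahEstimate f w₀ η b (pad ω) t‖ ^ 2 := by
  have hκ := batchVarianceFactor_nonneg (one_le_two.trans hn) hbn
  set V : ℕ → ℝ := fun t ↦
    𝔼 ω : Fin (m + 1) → Batch n b, ‖sarahEstimate f w₀ η b (pad ω) t‖ ^ 2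
  have (t : ℕ) : 0 ≤ V t := expect_nonneg fun _ _ ↦ by positivity
  have hterm (t : ℕ) (ht : t ∈ range m) :
      𝔼 ω : Fin (m + 1) → Batch n b, ‖sarahError f w₀ η b (pad ω) (t + 1)‖ ^ 2
        ≤ batchVarianceFactor n b * (L * η) ^ 2 * ∑ j ∈ range (m + 1), V j := by
    have htm : t + 1 < m + 1 := by simpa using ht
    refine (expect_sq_norm_sarahError_le hn hb hbn hf htm).trans ?_
    gcongr
  rw [sum_range_succ']
  simp only [sarahError_zero fun i ↦ (hf i).differentiable, norm_zero, zero_pow two_ne_zero,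
    expect_const_zero, add_zero]
  refine (sum_le_card_nsmul _ _ _ hterm).trans_eq ?_
  rw [card_range, nsmul_eq_mul]
  ring

lemma sum_sq_norm_gradient_sarahIterate_add_le [NeZero n] (hf : ∀ i, IsLSmooth L (f i))
    {Pmin : ℝ} (hmin : ∀ w, Pmin ≤ objective f w) (hη : 0 < η) (I : ℕ → Finset (Fin n)) (T : ℕ) :
    ∑ t ∈ range T, ‖∇ (objective f) (sarahIterate f w₀ η b I t)‖ ^ 2
        + (1 - L * η) * ∑ t ∈ range T, ‖sarahEstimate f w₀ η b I t‖ ^ 2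
      ≤ 2 / η * (objective f w₀ - Pmin) + ∑ t ∈ range T, ‖sarahError f w₀ η b I t‖ ^ 2 := by
  let p (t : ℕ) := objective f (sarahIterate f w₀ η b I t)
  rw [mul_sum, ← sum_add_distrib]
  calc ∑ t ∈ range T, (‖∇ (objective f) (sarahIterate f w₀ η b I t)‖ ^ 2
        + (1 - L * η) * ‖sarahEstimate f w₀ η b I t‖ ^ 2)
      ≤ ∑ t ∈ range T, (2 / η * (p t - p (t + 1)) + ‖sarahError f w₀ η b I t‖ ^ 2) :=
        sum_le_sum fun t _ ↦ (isLSmooth_objective hf).sq_norm_gradient_add_le hη _ _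
    _ = 2 / η * (objective f w₀ - p T) + ∑ t ∈ range T, ‖sarahError f w₀ η b I t‖ ^ 2 := by
        rw [sum_add_distrib, ← mul_sum, sum_range_sub']
        rfl
    _ ≤ _ := by gcongr; exact hmin _

lemma sum_expect_sq_norm_gradient_sarahIterate_le (hn : 2 ≤ n) (hb : 1 ≤ b) (hbn : b ≤ n)
    (hf : ∀ i, IsLSmooth L (f i)) {Pmin : ℝ} (hmin : ∀ w, Pmin ≤ objective f w) (hη : 0 < η)
    (hstep : batchVarianceFactor n b * m * (L * η) ^ 2 ≤ 1 - L * η) :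
    ∑ t ∈ range (m + 1), 𝔼 ω : Fin (m + 1) → Batch n b,
        ‖∇ (objective f) (sarahIterate f w₀ η b (pad ω) t)‖ ^ 2
      ≤ 2 / η * (objective f w₀ - Pmin) := by
  have : NeZero n := ⟨by lia⟩
  have := batch_nonempty hbn
  have hdescent : _ ≤ _ := expect_le_expect fun (ω : Fin (m + 1) → Batch n b) (_ : ω ∈ univ) ↦
    sum_sq_norm_gradient_sarahIterate_add_le (w₀ := w₀) (b := b) hf hmin hη (pad ω) (m + 1)
  simp only [expect_add_distrib, ← mul_expect, expect_sum_comm, Fintype.expect_const] at hdescent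
  have herror := sum_expect_sq_norm_sarahError_le (w₀ := w₀) (η := η) hn hb hbn hf m
  have habsorb := mul_le_mul_of_nonneg_right hstep <| sum_nonneg fun t (_ : t ∈ range (m + 1)) ↦
    expect_nonneg fun (ω : Fin (m + 1) → Batch n b) (_ : ω ∈ univ) ↦
      sq_nonneg ‖sarahEstimate f w₀ η b (pad ω) t‖
  linarith

lemma expect_sq_norm_gradient_sarah_output_le (hn : 2 ≤ n) (hb : 1 ≤ b) (hbn : b ≤ n)
    (hf : ∀ i, IsLSmooth L (f i)) {Pmin τ : ℝ} (hmin : ∀ w, Pmin ≤ objective f w)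
    (hdom : ∀ w, objective f w - Pmin ≤ τ * ‖∇ (objective f) w‖ ^ 2) (hη : 0 < η)
    (hstep : batchVarianceFactor n b * m * (L * η) ^ 2 ≤ 1 - L * η) (w : Vec d) :
    𝔼 a : (Fin (m + 1) → Batch n b) × Fin (m + 1),
        ‖∇ (objective f) (sarahIterate f w η b (pad a.1) a.2)‖ ^ 2
      ≤ 2 * τ / (η * (m + 1)) * ‖∇ (objective f) w‖ ^ 2 := by
  let g (t : ℕ) : ℝ := 𝔼 ω : Fin (m + 1) → Batch n b,
    ‖∇ (objective f) (sarahIterate f w η b (pad ω) t)‖ ^ 2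
  calc 𝔼 a : (Fin (m + 1) → Batch n b) × Fin (m + 1),
        ‖∇ (objective f) (sarahIterate f w η b (pad a.1) a.2)‖ ^ 2
      = 𝔼 t : Fin (m + 1), g t := (expect_product univ univ _).trans (expect_comm ..)
    _ = (∑ t ∈ range (m + 1), g t) / (m + 1) := by
        rw [Fintype.expect_eq_sum_div_card, Fin.sum_univ_eq_sum_range, Fintype.card_fin,
          Nat.cast_succ]
    _ ≤ 2 / η * (objective f w - Pmin) / (m + 1) := by
        gcongr
        exact sum_expect_sq_norm_gradient_sarahIterate_le hn hb hbn hf hmin hη hstep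
    _ ≤ 2 / η * (τ * ‖∇ (objective f) w‖ ^ 2) / (m + 1) := by gcongr; exact hdom w
    _ = 2 * τ / (η * (m + 1)) * ‖∇ (objective f) w‖ ^ 2 := by field_simp

end InnerLoop

/-! ### The outer loop -/

section OuterLoop

open Finset

variable {d n b m S s : ℕ} {f : Fin n → Vec d → ℝ} {w₀ : Vec d} {η : ℝ}

lemma outerIter_congr {ω ω' : ℕ → (ℕ → Finset (Fin n)) × ℕ} (h : ∀ k < s, ω k = ω' k) :
    outerIter f w₀ η b ω s = outerIter f w₀ η b ω' s := by
  induction s with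
  | zero => rfl
  | succ s ih => simp only [outerIter, ih fun k hk ↦ h k (by lia), h s (by lia)]

lemma padOuter_of_lt {k : ℕ} (ω : Fin S → (Fin (m + 1) → Batch n b) × Fin (m + 1)) (hk : k < S) :
    padOuter ω k = (pad (ω ⟨k, hk⟩).1, ((ω ⟨k, hk⟩).2 : ℕ)) :=
  dif_pos hk

lemma padOuter_update_of_ne {k : ℕ} {j : Fin S}
    (ω : Fin S → (Fin (m + 1) → Batch n b) × Fin (m + 1))
    (a : (Fin (m + 1) → Batch n b) × Fin (m + 1)) (hkj : k ≠ j) :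
    padOuter (Function.update ω j a) k = padOuter ω k := by
  unfold padOuter
  split_ifs
  · rw [Function.update_of_ne (by simpa [Fin.ext_iff] using hkj)]
  · rfl

lemma expect_outerIter_le_pow_mul (hbn : b ≤ n) {F : Vec d → ℝ} {γ : ℝ} (hγ : 0 ≤ γ)
    (hF : ∀ w, 𝔼 a : (Fin (m + 1) → Batch n b) × Fin (m + 1),
      F (sarahIterate f w η b (pad a.1) a.2) ≤ γ * F w) (w₀ : Vec d) (hs : s ≤ S) :
    𝔼 ω : Fin S → (Fin (m + 1) → Batch n b) × Fin (m + 1), F (outerIter f w₀ η b (padOuter ω) s)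
      ≤ γ ^ s * F w₀ := by
  have := batch_nonempty hbn
  induction s with
  | zero => simp [outerIter]
  | succ s ih =>
    let G (ω : Fin S → (Fin (m + 1) → Batch n b) × Fin (m + 1))
        (a : (Fin (m + 1) → Batch n b) × Fin (m + 1)) : ℝ :=
      F (sarahIterate f (outerIter f w₀ η b (padOuter ω) s) η b (pad a.1) a.2)
    have hG (ω : Fin S → (Fin (m + 1) → Batch n b) × Fin (m + 1))
        (a : (Fin (m + 1) → Batch n b) × Fin (m + 1)) :
        G (Function.update ω ⟨s, hs⟩ a) = G ω := by
      have hpast : outerIter f w₀ η b (padOuter (Function.update ω ⟨s, hs⟩ a)) s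
          = outerIter f w₀ η b (padOuter ω) s :=
        outerIter_congr fun k hk ↦ padOuter_update_of_ne ω a hk.ne
      simp only [G, hpast]
    calc 𝔼 ω : Fin S → (Fin (m + 1) → Batch n b) × Fin (m + 1),
          F (outerIter f w₀ η b (padOuter ω) (s + 1))
        = 𝔼 ω, G ω (ω ⟨s, hs⟩) := by simp only [outerIter, padOuter_of_lt _ hs, G]
      _ = 𝔼 ω, 𝔼 a, G ω a := expect_apply_eq_expect_expect _ G hG
      _ ≤ 𝔼 ω, γ * F (outerIter f w₀ η b (padOuter ω) s) := expect_le_expect fun _ _ ↦ hF _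
      _ = γ * 𝔼 ω, F (outerIter f w₀ η b (padOuter ω) s) := (mul_expect ..).symm
      _ ≤ γ * (γ ^ s * F w₀) := by gcongr; exact ih (by lia)
      _ = γ ^ (s + 1) * F w₀ := by ring

end OuterLoop

/-- **Theorem 2 of SARAH (nonconvex).** For `τ`-gradient dominated `P`, full SARAH
converges linearly: `E‖∇P(w̃_s)‖² ≤ γ̄ₘ^s ‖∇P(w̃₀)‖²` with `γ̄ₘ = 2τ/(η(m+1)) < 1`. -/
theorem sarah_gradient_dominated_linear_convergence
    {d n : ℕ} (hn : 2 ≤ n)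
    (f : Fin n → Vec d → ℝ) (L : ℝ) (hL : 0 < L)
    (hdiff : ∀ i, Differentiable ℝ (f i))
    (hsmooth : ∀ i (w w' : Vec d),
      ‖gradient (f i) w - gradient (f i) w'‖ ≤ L * ‖w - w'‖)
    (P : Vec d → ℝ) (hP : P = fun w => (n : ℝ)⁻¹ * ∑ i, f i w)
    (wstar : Vec d) (hmin : ∀ w, P wstar ≤ P w)
    (τ : ℝ) (hτ : 0 < τ) (hdom : ∀ w, P w - P wstar ≤ τ * ‖gradient P w‖ ^ 2)
    (w0 : Vec d) (η : ℝ) (hη : 0 < η) (b m : ℕ) (hb : 1 ≤ b) (hbn : b ≤ n)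
    (hη2 : η ≤ 2 / (L * (Real.sqrt (1 + 4 * (m : ℝ) / (b : ℝ)
      * (((n : ℝ) - (b : ℝ)) / ((n : ℝ) - 1))) + 1)))
    (hτm : τ < η * ((m : ℝ) + 1) / 2) (s : ℕ) :
    2 * τ / (η * ((m : ℝ) + 1)) < 1 ∧
      expec (fun ω : Fin s → (Fin (m + 1) → Batch n b) × Fin (m + 1) =>
          ‖gradient P (outerIter f w0 η b (padOuter ω) s)‖ ^ 2)
        ≤ (2 * τ / (η * ((m : ℝ) + 1))) ^ s * ‖gradient P w0‖ ^ 2 := by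
  subst hP
  have hf (i : Fin n) : IsLSmooth L (f i) := ⟨hdiff i, hsmooth i⟩
  have hstep : batchVarianceFactor n b * m * (L * η) ^ 2 ≤ 1 - L * η := by
    refine mul_sq_le_one_sub_of_le_div_sqrt
      (mul_nonneg (batchVarianceFactor_nonneg (one_le_two.trans hn) hbn) m.cast_nonneg)
      (by positivity) ?_
    have hfactor : 4 * (batchVarianceFactor n b * m)
        = 4 * (m : ℝ) / b * (((n : ℝ) - b) / ((n : ℝ) - 1)) := by
      rw [batchVarianceFactor]
      ring
    rwa [hfactor, ← le_div_iff₀' hL, div_div, mul_comm _ L]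
  refine ⟨by rw [div_lt_one (by positivity)]; linarith, ?_⟩
  rw [expec_eq_expect]
  exact expect_outerIter_le_pow_mul (F := fun w ↦ ‖gradient (objective f) w‖ ^ 2) hbn
    (by positivity)
    (expect_sq_norm_gradient_sarah_output_le hn hb hbn hf hmin hdom hη hstep) w0 le_rfl
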